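/- Let K be a field. An element r ∈ K is arithmetically fixed if and only if the singleton set {r} is definable in K by a parameter-free existential formula in the first-order language of rings; that is, K̃ = {x ∈ K : there is a quantifier-free formula φ(x, x₁, …, x_n) in the language of rings such that {r ∈ K : K ⊨ ∃x₁ … ∃x_n φ(r, x₁, …, x_n)} = {x}}. -/

import Mathlib

/-!
If `A` is a finite set witnessing that `r` is arithmetically fixed, name its elements
`a 0, …, a (n - 1)`. The finitely many relations `a i = 1`, `a i + a j = a k`, `a i * a j = a k`
that hold in `A` form a conjunction of equations in variables `v 0, …, v (n - 1)`, whose solutions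
are exactly the arithmetic maps on `A`; adding `x = v i` for the index `i` of `r` defines `{r}`.

Conversely, suppose `∃ v, φ(x, v)` defines `{r}`, and fix `v` with `φ(r, v)`. For a suitable finite
set `A`, every arithmetic map `f` on `A` satisfies `φ(r, v) ↔ φ(f r, f ∘ v)`, whence `f r = r`.
The set `A` collects the values of all subterms, so that `f` commutes with the evaluation of the
terms in `φ`, and for each inequality `s ≠ t` in `φ` also `s - t` and its inverse: an arithmetic map
cannot kill an element whose inverse is in its domain, so it preserves inequality as well.
-/

open FirstOrder

attribute [local instance] FirstOrder.Ring.compatibleRingOfRing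

/-- A map `f` is *arithmetic* on a subset `A` of a field `K`. -/
def ArithmeticMap {K : Type*} [Field K] (A : Set K) (f : K → K) : Prop :=
  ((1 : K) ∈ A → f 1 = 1) ∧
  (∀ a b : K, a ∈ A → b ∈ A → a + b ∈ A → f (a + b) = f a + f b) ∧
  (∀ a b : K, a ∈ A → b ∈ A → a * b ∈ A → f (a * b) = f a * f b)

/-- An element `r` of a field `K` is *arithmetically fixed* if there is a finite set
`A ⊆ K` with `r ∈ A` such that every arithmetic map `f : A → K` fixes `r`. -/
def ArithFixed {K : Type*} [Field K] (r : K) : Prop :=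
  ∃ A : Finset K, r ∈ A ∧ ∀ f : K → K, ArithmeticMap (↑A : Set K) f → f r = r

section FixedOfDefinable

variable {K : Type*} [Field K]

theorem ArithmeticMap.mono {A B : Set K} {f : K → K} (hAB : A ⊆ B) (hf : ArithmeticMap B f) :
    ArithmeticMap A f :=
  ⟨fun h => hf.1 (hAB h), fun a b ha hb hab => hf.2.1 a b (hAB ha) (hAB hb) (hAB hab),
    fun a b ha hb hab => hf.2.2 a b (hAB ha) (hAB hb) (hAB hab)⟩

/-- `P` holds for every map that is arithmetic on some fixed, sufficiently large finite set. -/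
def ForcedByArith (P : (K → K) → Prop) : Prop :=
  ∃ A : Finset K, ∀ f : K → K, ArithmeticMap (↑A : Set K) f → P f

theorem ForcedByArith.imp {P Q : (K → K) → Prop} (hP : ForcedByArith P) (h : ∀ f, P f → Q f) :
    ForcedByArith Q :=
  let ⟨A, hA⟩ := hP
  ⟨A, fun f hf => h f (hA f hf)⟩

theorem ForcedByArith.and {P Q : (K → K) → Prop} (hP : ForcedByArith P) (hQ : ForcedByArith Q) :
    ForcedByArith (fun f => P f ∧ Q f) := by
  classical
  obtain ⟨A, hA⟩ := hP
  obtain ⟨B, hB⟩ := hQ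
  exact ⟨A ∪ B, fun f hf => ⟨hA f (hf.mono (by simp)), hB f (hf.mono (by simp))⟩⟩

theorem forcedByArith_one : ForcedByArith (fun f : K → K => f 1 = 1) :=
  ⟨{1}, fun _ hf => hf.1 (by simp)⟩

theorem forcedByArith_add (a b : K) : ForcedByArith (fun f : K → K => f (a + b) = f a + f b) := by
  classical
  exact ⟨{a, b, a + b}, fun _ hf => hf.2.1 a b (by simp) (by simp) (by simp)⟩

theorem forcedByArith_mul (a b : K) : ForcedByArith (fun f : K → K => f (a * b) = f a * f b) := by
  classical
  exact ⟨{a, b, a * b}, fun _ hf => hf.2.2 a b (by simp) (by simp) (by simp)⟩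

theorem forcedByArith_zero : ForcedByArith (fun f : K → K => f 0 = 0) :=
  (forcedByArith_add 0 0).imp fun f h => by simpa using h

theorem forcedByArith_neg (a : K) : ForcedByArith (fun f : K → K => f (-a) = -f a) :=
  ((forcedByArith_add (-a) a).and forcedByArith_zero).imp fun f h => by
    rw [neg_add_cancel, h.2] at h
    exact eq_neg_of_add_eq_zero_left h.1.symm

theorem forcedByArith_ne {a b : K} (hab : a ≠ b) : ForcedByArith (fun f : K → K => f a ≠ f b) :=
  (((forcedByArith_add b (a - b)).and (forcedByArith_mul (a - b) (a - b)⁻¹)).and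
    forcedByArith_one).imp fun f ⟨⟨h₁, h₂⟩, h₃⟩ h => by
      rw [add_sub_cancel, h, left_eq_add] at h₁
      rw [mul_inv_cancel₀ (sub_ne_zero.2 hab), h₁, h₃, zero_mul] at h₂
      exact one_ne_zero h₂

theorem forcedByArith_term {α : Type*} (t : Language.ring.Term α) (v : α → K) :
    ForcedByArith (fun f : K → K => f (t.realize v) = t.realize (f ∘ v)) := by
  induction t with
  | var a => exact ⟨∅, fun _ _ => rfl⟩
  | func g ts ih =>
    cases g with
    | add =>
      refine ((forcedByArith_add ((ts 0).realize v) ((ts 1).realize v)).and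
        ((ih 0).and (ih 1))).imp fun f h => ?_
      have h₁ := h.1
      rw [h.2.1, h.2.2] at h₁
      exact h₁
    | mul =>
      refine ((forcedByArith_mul ((ts 0).realize v) ((ts 1).realize v)).and
        ((ih 0).and (ih 1))).imp fun f h => ?_
      have h₁ := h.1
      rw [h.2.1, h.2.2] at h₁
      exact h₁
    | neg =>
      refine ((forcedByArith_neg ((ts 0).realize v)).and (ih 0)).imp fun f h => ?_
      have h₁ := h.1
      rw [h.2] at h₁
      exact h₁
    | zero => exact forcedByArith_zero
    | one => exact forcedByArith_one

theorem forcedByArith_isQF {α : Type*} {n : ℕ} {φ : Language.ring.BoundedFormula α n}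
    (hφ : φ.IsQF) (x : α → K) (v : Fin n → K) :
    ForcedByArith (fun f : K → K => φ.Realize x v ↔ φ.Realize (f ∘ x) (f ∘ v)) := by
  induction hφ with
  | falsum => exact ⟨∅, fun _ _ => Iff.rfl⟩
  | of_isAtomic h =>
    cases h with
    | equal t₁ t₂ =>
      have key := (forcedByArith_term t₁ (Sum.elim x v)).and (forcedByArith_term t₂ (Sum.elim x v))
      simp only [Sum.comp_elim] at key
      simp only [Language.BoundedFormula.realize_bdEqual]
      by_cases h : t₁.realize (Sum.elim x v) = t₂.realize (Sum.elim x v)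
      · exact key.imp fun f hf => by rw [← hf.1, ← hf.2, h]; simp
      · exact (key.and (forcedByArith_ne h)).imp fun f hf => by
          rw [← hf.1.1, ← hf.1.2]
          exact iff_of_false h hf.2
    | rel R ts => exact R.elim
  | imp _ _ ih₁ ih₂ =>
    exact (ih₁.and ih₂).imp fun f h => by
      rw [Language.BoundedFormula.realize_imp, Language.BoundedFormula.realize_imp, h.1, h.2]

theorem ForcedByArith.arithFixed {r : K} (h : ForcedByArith (fun f : K → K => f r = r)) :
    ArithFixed r := by
  classical
  obtain ⟨A, hA⟩ := h
  exact ⟨insert r A, by simp, fun f hf => hA f (hf.mono (by simp))⟩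

end FixedOfDefinable

section DefinableOfFixed

variable {K : Type*} [Field K] {n : ℕ}

/-- The relation `P x v` on `K × Kⁿ` is defined by a parameter-free quantifier-free formula. -/
def QFDefinable (P : K → (Fin n → K) → Prop) : Prop :=
  ∃ φ : Language.ring.BoundedFormula (Fin 1) n, φ.IsQF ∧
    ∀ x v, φ.Realize (fun _ => x) v ↔ P x v

theorem QFDefinable.and {P Q : K → (Fin n → K) → Prop} (hP : QFDefinable P) (hQ : QFDefinable Q) :
    QFDefinable (fun x v => P x v ∧ Q x v) := by
  obtain ⟨φ, hφ, h₁⟩ := hP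
  obtain ⟨ψ, hψ, h₂⟩ := hQ
  exact ⟨φ ⊓ ψ, hφ.inf hψ, fun x v => by rw [Language.BoundedFormula.realize_inf, h₁, h₂]⟩

theorem qfDefinable_true : QFDefinable (fun (_ : K) (_ : Fin n → K) => True) :=
  ⟨⊤, .top, fun x v => by simp⟩

theorem QFDefinable.forall_fin {m : ℕ} {P : Fin m → K → (Fin n → K) → Prop}
    (h : ∀ i, QFDefinable (P i)) : QFDefinable (fun x v => ∀ i, P i x v) := by
  induction m with
  | zero => simpa using qfDefinable_true
  | succ m ih =>
    simp only [Fin.forall_fin_succ]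
    exact (h 0).and (ih fun i => h i.succ)

theorem QFDefinable.const_imp {p : Prop} {P : K → (Fin n → K) → Prop} (h : QFDefinable P) :
    QFDefinable (fun x v => p → P x v) := by
  by_cases hp : p
  · simpa [hp] using h
  · simpa [hp] using qfDefinable_true

theorem qfDefinable_eq (t₁ t₂ : Language.ring.Term (Fin 1 ⊕ Fin n)) :
    QFDefinable (fun (x : K) v => t₁.realize (Sum.elim (fun _ => x) v) =
      t₂.realize (Sum.elim (fun _ => x) v)) :=
  ⟨t₁.bdEqual t₂, (Language.BoundedFormula.IsAtomic.equal t₁ t₂).isQF,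
    fun _ _ => Language.BoundedFormula.realize_bdEqual t₁ t₂⟩

/-- The equations in `v` express that `a i ↦ v i` is arithmetic on the range of `a`, and
`x` is the image of `a i₀` under this map. -/
theorem qfDefinable_arithmetic (a : Fin n → K) (i₀ : Fin n) :
    QFDefinable (fun (x : K) (v : Fin n → K) => x = v i₀ ∧ (∀ i, a i = 1 → v i = 1) ∧
      (∀ i j k, a i + a j = a k → v k = v i + v j) ∧
      (∀ i j k, a i * a j = a k → v k = v i * v j)) := by
  let X : Language.ring.Term (Fin 1 ⊕ Fin n) := .var (.inl 0)
  let V (i : Fin n) : Language.ring.Term (Fin 1 ⊕ Fin n) := .var (.inr i)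
  refine .and ?_ (.and ?_ (.and ?_ ?_))
  · exact qfDefinable_eq X (V i₀)
  · refine .forall_fin fun i => .const_imp ?_
    simpa [V] using qfDefinable_eq (K := K) (V i) 1
  · refine .forall_fin fun i => .forall_fin fun j => .forall_fin fun k => .const_imp ?_
    simpa [V] using qfDefinable_eq (K := K) (V k) (V i + V j)
  · refine .forall_fin fun i => .forall_fin fun j => .forall_fin fun k => .const_imp ?_
    simpa [V] using qfDefinable_eq (K := K) (V k) (V i * V j)

end DefinableOfFixed

/-- `K̃` is exactly the set of elements `x ∈ K` such that `{x}` is definable in `K`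
by a parameter-free existential formula in the first-order language of rings. -/
theorem arithFixed_iff_existentially_definable (K : Type*) [Field K] :
    {r : K | ArithFixed r} =
      {r : K | ∃ (n : ℕ) (φ : Language.ring.BoundedFormula (Fin 1) n), φ.IsQF ∧
        {x : K | ∃ v : Fin n → K, φ.Realize (fun _ => x) v} = {r}} := by
  ext r
  constructor
  · rintro ⟨A, hr, hA⟩
    let e := A.equivFin
    let a : Fin A.card → K := fun i => e.symm i
    have ha (y : K) (hy : y ∈ A) : a (e ⟨y, hy⟩) = y := by simp [a]
    obtain ⟨φ, hφ, hreal⟩ := qfDefinable_arithmetic a (e ⟨r, hr⟩)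
    refine ⟨A.card, φ, hφ, Set.eq_singleton_iff_unique_mem.2 ⟨⟨a, ?_⟩, ?_⟩⟩
    · rw [hreal]
      exact ⟨(ha r hr).symm, fun _ h => h, fun _ _ _ h => h.symm, fun _ _ _ h => h.symm⟩
    · rintro x ⟨v, hv⟩
      rw [hreal] at hv
      obtain ⟨hx, hone, hadd, hmul⟩ := hv
      classical
      -- The solution `v` is turned into a map on `K`; its values outside `A` are irrelevant.
      let f : K → K := fun y => if hy : y ∈ A then v (e ⟨y, hy⟩) else 0
      have hf (y : K) (hy : y ∈ A) : f y = v (e ⟨y, hy⟩) := dif_pos hy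
      have key : f r = r := by
        refine hA f ⟨fun h => ?_, fun y z hy hz hyz => ?_, fun y z hy hz hyz => ?_⟩
        · rw [hf 1 h]
          exact hone _ (ha 1 h)
        · rw [hf _ hy, hf _ hz, hf _ hyz]
          exact hadd _ _ _ (by rw [ha, ha, ha])
        · rw [hf _ hy, hf _ hz, hf _ hyz]
          exact hmul _ _ _ (by rw [ha, ha, ha])
      rw [hx, ← hf r hr, key]
  · rintro ⟨n, φ, hφ, h⟩
    obtain ⟨⟨v, hv⟩, huniq⟩ := Set.eq_singleton_iff_unique_mem.1 h
    exact ((forcedByArith_isQF hφ (fun _ => r) v).imp fun f hf =>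
      huniq (f r) ⟨f ∘ v, hf.1 hv⟩).arithFixed
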